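/- arXiv:math/9403211 — 2 statements merged into one kernel-verified Lean document; each statement's English description precedes it below -/
import Mathlib

section
/- Let $X$ be a Banach space such that no sequence in the dual $X'$ is equivalent to the unit vector basis of $\ell^1$ (i.e. there is no sequence $(x'_n)$ in $X'$ and constants $A, B > 0$ with $A\sum_{i=1}^r |t_i| \geq \|\sum_{i=1}^r t_i x'_i\| \geq B \sum_{i=1}^r |t_i|$ for all $r$ and scalars $t_1,\ldots,t_r$). Suppose moreover that every weak*-convergent sequence in $X'$ is norm convergent. Then $X'$ is finite-dimensional. -/
open Filter

/-- The pair of sequences of sets `C true`, `C false` converges on `X` along `M`. -/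
def RConv {S : Type*} (C : Bool → ℕ → Set S) (X : Set S) (M : Set ℕ) : Prop :=
  ∀ s ∈ X, ∃ b, {n | n ∈ M ∧ s ∈ C b n}.Finite

theorem exists_chain (Q : ℕ → ℕ → Set ℕ → Prop) (M0 : Set ℕ) (hM0 : M0.Infinite)
    (h : ∀ k, ∀ M ⊆ M0, M.Infinite → ∃ n ∈ M, ∃ M' ⊆ M, M'.Infinite ∧ Q k n M') :
    ∃ (φ : ℕ → ℕ) (Ms : ℕ → Set ℕ), StrictMono φ ∧ (∀ k, φ k ∈ M0) ∧
      (∀ k, Q k (φ k) (Ms k)) ∧ ∀ k j, k < j → φ j ∈ Ms k := by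
  choose nf hnf Mf hMf hinf hQ using h
  let T := {M : Set ℕ // M ⊆ M0 ∧ M.Infinite}
  let step : ℕ → T → T := fun k M =>
    ⟨Mf k M.1 M.2.1 M.2.2 ∩ Set.Ioi (nf k M.1 M.2.1 M.2.2),
      (Set.inter_subset_left.trans (hMf k _ _ _)).trans M.2.1, by
        have := (hinf k M.1 M.2.1 M.2.2).sdiff (Set.finite_Iic (nf k M.1 M.2.1 M.2.2))
        refine this.mono ?_
        rintro x ⟨hx, hx2⟩
        exact ⟨hx, by simpa using hx2⟩⟩
  let st : ℕ → T := fun k => Nat.rec ⟨M0, subset_rfl, hM0⟩ step k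
  have hst : ∀ k, st (k+1) = step k (st k) := fun k => rfl
  have hanti : Antitone (fun k => (st k).1) := by
    apply antitone_nat_of_succ_le
    intro k
    rw [hst]
    exact Set.inter_subset_left.trans (hMf k _ _ _)
  have hmem : ∀ k j, k < j → nf j (st j).1 (st j).2.1 (st j).2.2 ∈ (st (k+1)).1 :=
    fun k j hkj => hanti (Nat.succ_le_of_lt hkj) (hnf j _ _ _)
  refine ⟨fun k => nf k (st k).1 (st k).2.1 (st k).2.2,
    fun k => Mf k (st k).1 (st k).2.1 (st k).2.2, ?_, ?_, ?_, ?_⟩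
  · intro k j hkj
    exact (hmem k j hkj).2
  · intro k
    exact (st k).2.1 (hnf k _ _ _)
  · intro k
    exact hQ k _ _ _
  · intro k j hkj
    exact (hmem k j hkj).1

theorem rconv_split {S : Type*} (C : Bool → ℕ → Set S) (F : Set (Set S)) (hF : F.Finite)
    (M : Set ℕ) (hM : M.Infinite)
    (hP : ∀ X ∈ F, ∀ M' ⊆ M, M'.Infinite → ¬ RConv C X M') :
    ∃ n ∈ M, ∃ M' ⊆ M, M'.Infinite ∧
      ∀ X ∈ F, ∀ b, ∀ N ⊆ M', N.Infinite → ¬ RConv C (X ∩ C b n) N := by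
  by_contra! h
  obtain ⟨φ, Ms, hφ, hφM, hQ, hmem⟩ := exists_chain
    (fun _ n M' => ∃ X ∈ F, ∃ b, RConv C (X ∩ C b n) M') M hM (by
      intro k N hN hNi
      obtain ⟨n, hn⟩ := hNi.nonempty
      obtain ⟨X, hX, b, N', hN', hi, hc⟩ := h n (hN hn) N hN hNi
      exact ⟨n, hn, N', hN', hi, X, hX, b, hc⟩)
  choose X hX b hc using hQ
  have : Finite F := hF
  obtain ⟨⟨Y, c⟩, hK⟩ := Finite.exists_infinite_fiber (fun k => ((⟨X k, hX k⟩ : F), b k))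
  rw [Set.infinite_coe_iff] at hK
  set K := (fun k => ((⟨X k, hX k⟩ : F), b k)) ⁻¹' {(Y, c)} with hKdef
  have hKX : ∀ k ∈ K, X k = Y.1 ∧ b k = c := by
    intro k hk
    have : ((⟨X k, hX k⟩ : F), b k) = (Y, c) := hk
    rw [Prod.mk.injEq] at this
    exact ⟨congrArg Subtype.val this.1, this.2⟩
  have hN := hP Y.1 Y.2 (φ '' K) (by rintro _ ⟨k, _, rfl⟩; exact hφM k)
    (hK.image hφ.injective.injOn)
  unfold RConv at hN
  push Not at hN
  obtain ⟨s, hs, hinf⟩ := hN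
  obtain ⟨_, ⟨k, hk, rfl⟩, hsk⟩ := (hinf c).nonempty
  obtain ⟨hk1, hk2⟩ := hKX k hk
  obtain ⟨d, hd⟩ := hc k s ⟨hk1 ▸ hs, hk2 ▸ hsk⟩
  refine hinf d ((hd.union ((Set.finite_Iic k).image φ)).subset ?_)
  rintro _ ⟨⟨j, hj, rfl⟩, hsj⟩
  rcases le_or_gt j k with hjk | hjk
  · exact Or.inr ⟨j, hjk, rfl⟩
  · exact Or.inl ⟨hmem k j hjk, hsj⟩

/-- Rosenthal's combinatorial dichotomy: an independent subsequence. -/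
theorem exists_independent {S : Type*} (C : Bool → ℕ → Set S) (M : Set ℕ) (hM : M.Infinite)
    (hP : ∀ M' ⊆ M, M'.Infinite → ¬ RConv C Set.univ M') :
    ∃ φ : ℕ → ℕ, ∀ (e : ℕ → Bool) (r : ℕ), ∃ s, ∀ i < r, s ∈ C (e i) (φ i) := by
  let T := {p : Set (Set S) × Set ℕ // p.1.Finite ∧ p.2.Infinite ∧
    ∀ X ∈ p.1, ∀ M' ⊆ p.2, M'.Infinite → ¬ RConv C X M'}
  have key : ∀ p : T, ∃ (n : ℕ) (q : T), ∀ X ∈ p.1.1, ∀ b, X ∩ C b n ∈ q.1.1 := by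
    rintro ⟨⟨F, N⟩, hF, hN, hPN⟩
    obtain ⟨n, _, M', _, hi, hh⟩ := rconv_split C F hF N hN hPN
    refine ⟨n, ⟨⟨(fun q : Set S × Bool => q.1 ∩ C q.2 n) '' (F ×ˢ Set.univ), M'⟩,
      (hF.prod Set.finite_univ).image _, hi, ?_⟩, ?_⟩
    · rintro _ ⟨⟨X, b⟩, ⟨hX, _⟩, rfl⟩ M'' h1 h2
      exact hh X hX b M'' h1 h2
    · intro X hX b
      exact ⟨(X, b), ⟨hX, trivial⟩, rfl⟩
  choose nf qf hq using key
  let st : ℕ → T := fun k => Nat.rec ⟨⟨{Set.univ}, M⟩, Set.finite_singleton _, hM, by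
    rintro X rfl
    exact hP⟩ (fun _ p => qf p) k
  refine ⟨fun k => nf (st k), fun e r => ?_⟩
  have : ∃ X ∈ (st r).1.1, ∀ s ∈ X, ∀ i < r, s ∈ C (e i) (nf (st i)) := by
    induction r with
    | zero => exact ⟨Set.univ, rfl, by simp⟩
    | succ r ih =>
      obtain ⟨X, hX, h⟩ := ih
      refine ⟨X ∩ C (e r) (nf (st r)), hq (st r) X hX (e r), ?_⟩
      rintro s ⟨hs, hs'⟩ i hi
      rcases Nat.lt_succ_iff_lt_or_eq.1 hi with hi | rfl
      · exact h s hs i hi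
      · exact hs'
  obtain ⟨X, hX, h⟩ := this
  have hne := (st r).2.2.2 X hX _ subset_rfl (st r).2.2.1
  unfold RConv at hne
  push Not at hne
  obtain ⟨s, hs, _⟩ := hne
  exact ⟨s, h s hs⟩

theorem exists_good_pair {S : Type*} (C : ℕ → Bool → ℕ → Set S) :
    (∃ (k : ℕ) (M : Set ℕ), M.Infinite ∧ ∀ M' ⊆ M, M'.Infinite → ¬ RConv (C k) Set.univ M') ∨
    ∃ φ : ℕ → ℕ, StrictMono φ ∧ ∀ k s, ∃ b, {j | s ∈ C k b (φ j)}.Finite := by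
  by_contra! h
  obtain ⟨h, h'⟩ := h
  obtain ⟨φ, Ms, hφ, _, hQ, hmem⟩ := exists_chain
    (fun k _ M' => RConv (C k) Set.univ M') Set.univ Set.infinite_univ (by
      intro k N _ hNi
      obtain ⟨n, hn⟩ := hNi.nonempty
      obtain ⟨M', h1, h2, h3⟩ := h k N hNi
      exact ⟨n, hn, M', h1, h2, h3⟩)
  obtain ⟨k, s, hks⟩ := h' φ hφ
  obtain ⟨b, hb⟩ := hQ k s trivial
  refine hks b (((hb.preimage hφ.injective.injOn).union (Set.finite_Iic k)).subset ?_)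
  intro j hj
  rcases le_or_gt j k with hjk | hjk
  · exact Or.inr hjk
  · exact Or.inl ⟨hmem k j hjk, hj⟩

theorem exists_signs {𝕜 : Type*} [RCLike 𝕜] (r : ℕ) (t : Fin r → 𝕜) :
    ∃ e : ℕ → Bool, (∑ i, ‖t i‖) / 2 ≤ ‖∑ i, t i * (if e i then (1:𝕜) else -1)‖ := by
  have aux : ∀ u : Fin r → ℝ, ∃ e : ℕ → Bool,
      ∀ i, u i * (if e i then (1:ℝ) else -1) = |u i| := by
    intro u
    refine ⟨fun i => if h : i < r then decide (0 ≤ u ⟨i, h⟩) else true, fun i => ?_⟩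
    by_cases h : 0 ≤ u i
    · simp [h, abs_of_nonneg h]
    · simp [h, abs_of_neg (not_le.1 h)]
  have hsum : ∑ i, ‖t i‖ ≤ ∑ i, |RCLike.re (t i)| + ∑ i, |RCLike.im (t i)| := by
    rw [← Finset.sum_add_distrib]
    exact Finset.sum_le_sum fun i _ => by
      have h1 := RCLike.norm_sq_eq_def (z := t i)
      have h2 := abs_nonneg (RCLike.re (t i))
      have h3 := abs_nonneg (RCLike.im (t i))
      refine abs_le_of_sq_le_sq' ?_ (by positivity) |>.2
      rw [h1]
      nlinarith [abs_mul_abs_self (RCLike.re (t i)), abs_mul_abs_self (RCLike.im (t i)),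
        mul_nonneg h2 h3]
  rcases le_total (∑ i, |RCLike.im (t i)|) (∑ i, |RCLike.re (t i)|) with h | h
  · obtain ⟨e, he⟩ := aux (fun i => RCLike.re (t i))
    refine ⟨e, ?_⟩
    have : RCLike.re (∑ i, t i * (if e i then (1:𝕜) else -1)) = ∑ i, |RCLike.re (t i)| := by
      rw [map_sum]
      refine Finset.sum_congr rfl fun i _ => ?_
      rw [← he i]
      split_ifs <;> simp
    have h3 := RCLike.re_le_norm (∑ i, t i * (if e i then (1:𝕜) else -1))
    linarith
  · obtain ⟨e, he⟩ := aux (fun i => RCLike.im (t i))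
    refine ⟨e, ?_⟩
    have : RCLike.im (∑ i, t i * (if e i then (1:𝕜) else -1)) = ∑ i, |RCLike.im (t i)| := by
      rw [map_sum]
      refine Finset.sum_congr rfl fun i _ => ?_
      rw [← he i]
      split_ifs <;> simp
    have h3 := RCLike.im_le_norm (∑ i, t i * (if e i then (1:𝕜) else -1))
    linarith

theorem l1_lower {𝕜 : Type*} [RCLike 𝕜] {X : Type*}
    [NormedAddCommGroup X] [NormedSpace 𝕜 X] (f : ℕ → X →L[𝕜] 𝕜) (u v : 𝕜)
    (h : ∀ (e : ℕ → Bool) (r : ℕ), ∃ s : X, ‖s‖ ≤ 1 ∧ ∀ i < r,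
      ‖f i s - (if e i then u else v)‖ ≤ ‖u - v‖ / 16) (r : ℕ) (t : Fin r → 𝕜) :
    ‖u - v‖ / 8 * ∑ i, ‖t i‖ ≤ ‖∑ i, t i • f i‖ := by
  obtain ⟨e, he⟩ := exists_signs r t
  obtain ⟨s, hs, hse⟩ := h e r
  obtain ⟨s', hs', hse'⟩ := h (fun i => !e i) r
  set g := ∑ i, t i • f i with hg
  have hgs : ∀ x, g x = ∑ i, t i * f i x := by
    intro x
    simp [hg]
  have e1 : g s - g s' = (u - v) * ∑ i, t i * (if e i then (1:𝕜) else -1) +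
      ∑ i, t i * (f i s - f i s' - (if e i then (1:𝕜) else -1) * (u - v)) := by
    rw [hgs, hgs, Finset.mul_sum, ← Finset.sum_sub_distrib, ← Finset.sum_add_distrib]
    exact Finset.sum_congr rfl fun i _ => by ring
  have e2 : ‖∑ i, t i * (f i s - f i s' - (if e i then (1:𝕜) else -1) * (u - v))‖ ≤
      (∑ i, ‖t i‖) * (‖u - v‖ / 8) := by
    rw [Finset.sum_mul]
    refine (norm_sum_le _ _).trans (Finset.sum_le_sum fun i _ => ?_)
    rw [norm_mul]
    refine mul_le_mul_of_nonneg_left ?_ (norm_nonneg _)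
    have a1 := hse i i.2
    have a2 := hse' i i.2
    have a3 : f i s - f i s' - (if e i then (1:𝕜) else -1) * (u - v) =
        (f i s - (if e i then u else v)) - (f i s' - (if (!e i) then u else v)) := by
      cases e i <;> simp <;> ring
    rw [a3]
    refine (norm_sub_le _ _).trans ?_
    linarith
  have e3 : ‖u - v‖ * ((∑ i, ‖t i‖) / 2) ≤
      ‖(u - v) * ∑ i, t i * (if e i then (1:𝕜) else -1)‖ := by
    rw [norm_mul]
    exact mul_le_mul_of_nonneg_left he (norm_nonneg _)
  have e4 : ‖g s - g s'‖ ≤ 2 * ‖g‖ := by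
    have b1 := g.le_of_opNorm_le_of_le le_rfl hs
    have b2 := g.le_of_opNorm_le_of_le le_rfl hs'
    have := norm_sub_le (g s) (g s')
    linarith
  have e5 := norm_sub_le_norm_add
    ((u - v) * ∑ i, t i * (if e i then (1:𝕜) else -1))
    (∑ i, t i * (f i s - f i s' - (if e i then (1:𝕜) else -1) * (u - v)))
  rw [← e1] at e5
  have e6 : 0 ≤ ‖u - v‖ * ∑ i, ‖t i‖ :=
    mul_nonneg (norm_nonneg _) (Finset.sum_nonneg fun i _ => norm_nonneg _)
  nlinarith

theorem conv_of_pairs {𝕜 : Type*} [RCLike 𝕜] (a : ℕ → 𝕜) (R : ℝ) (ha : ∀ n, ‖a n‖ ≤ R)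
    (d : ℕ → 𝕜) (hd : DenseRange d)
    (h : ∀ k l : ℕ, {j | a j ∈ Metric.ball (d k) (‖d k - d l‖ / 16)}.Finite ∨
      {j | a j ∈ Metric.ball (d l) (‖d k - d l‖ / 16)}.Finite) :
    ∃ z, Tendsto a atTop (nhds z) := by
  have hc : IsCompact (Metric.closedBall (0:𝕜) R) := isCompact_closedBall _ _
  have hm : ∀ n, a n ∈ Metric.closedBall (0:𝕜) R := fun n => by simpa using ha n
  obtain ⟨z, hz, hzc⟩ := hc.exists_mapClusterPt_of_frequently (l := atTop) (f := a)
    (Frequently.of_forall hm)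
  refine ⟨z, hc.tendsto_nhds_of_unique_mapClusterPt (Eventually.of_forall hm) ?_⟩
  intro w hw hwc
  by_contra hne
  have hpos : 0 < ‖z - w‖ := norm_pos_iff.2 (sub_ne_zero.2 (Ne.symm hne))
  obtain ⟨k, hk⟩ := hd.exists_dist_lt z (show 0 < ‖z - w‖ / 64 by positivity)
  obtain ⟨l, hl⟩ := hd.exists_dist_lt w (show 0 < ‖z - w‖ / 64 by positivity)
  have hkl : ‖z - w‖ ≤ ‖z - w‖ / 64 + ‖d k - d l‖ + ‖z - w‖ / 64 := by
    have t1 := dist_triangle4 z (d k) (d l) w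
    rw [dist_comm (d l) w] at t1
    rw [← dist_eq_norm, ← dist_eq_norm] at *
    linarith
  have inf : ∀ y m, MapClusterPt y atTop a → dist y (d m) < ‖z - w‖ / 64 →
      ¬ {j | a j ∈ Metric.ball (d m) (‖d k - d l‖ / 16)}.Finite := by
    intro y m hy hym
    have hn : Metric.ball (d m) (‖d k - d l‖ / 16) ∈ nhds y := by
      apply Metric.isOpen_ball.mem_nhds
      rw [Metric.mem_ball]
      linarith
    exact Nat.frequently_atTop_iff_infinite.1 (mapClusterPt_iff_frequently.1 hy _ hn)
  rcases h k l with h | h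
  · exact inf z k hzc hk h
  · exact inf w l hwc hl h

/-- If no sequence in the dual `X'` of a Banach space `X` is equivalent to the
unit vector basis of `ℓ¹`, and every weak*-convergent sequence in `X'` is norm
convergent, then `X'` is finite-dimensional. -/
theorem dual_finiteDimensional {𝕜 : Type*} [RCLike 𝕜] {X : Type*}
    [NormedAddCommGroup X] [NormedSpace 𝕜 X] [CompleteSpace X]
    (h1 : ¬ ∃ (x' : ℕ → X →L[𝕜] 𝕜) (A B : ℝ), 0 < A ∧ 0 < B ∧
      ∀ (r : ℕ) (t : Fin r → 𝕜),
        ‖∑ i, t i • x' i‖ ≤ A * ∑ i, ‖t i‖ ∧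
          B * ∑ i, ‖t i‖ ≤ ‖∑ i, t i • x' i‖)
    (h2 : ∀ (f : ℕ → X →L[𝕜] 𝕜) (g : X →L[𝕜] 𝕜),
      (∀ x : X, Tendsto (fun n => f n x) atTop (nhds (g x))) →
        ∃ h : X →L[𝕜] 𝕜, Tendsto f atTop (nhds h)) :
    FiniteDimensional 𝕜 (X →L[𝕜] 𝕜) := by
  have main : ∀ f : ℕ → X →L[𝕜] 𝕜, (∀ n, ‖f n‖ ≤ 1) →
      ∃ (g : X →L[𝕜] 𝕜) (φ : ℕ → ℕ), StrictMono φ ∧ Tendsto (f ∘ φ) atTop (nhds g) := by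
    intro f hf
    obtain ⟨d, hd⟩ := TopologicalSpace.exists_dense_seq 𝕜
    let S := {x : X // ‖x‖ ≤ 1}
    have hfs : ∀ n (s : S), ‖f n s.1‖ ≤ 1 := fun n s => by
      have := (f n).le_of_opNorm_le_of_le (hf n) s.2
      simpa using this
    let C : ℕ → Bool → ℕ → Set S := fun k b n =>
      {s | f n s.1 ∈ Metric.ball (if b then d k.unpair.1 else d k.unpair.2)
        (‖d k.unpair.1 - d k.unpair.2‖ / 16)}
    rcases exists_good_pair C with ⟨k, M, hM, hP⟩ | ⟨φ, hφ, hconv⟩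
    · exfalso
      obtain ⟨φ, hφ⟩ := exists_independent (C k) M hM hP
      set u := d k.unpair.1 with hu
      set v := d k.unpair.2 with hv
      have hpos : 0 < ‖u - v‖ := by
        obtain ⟨s, hs⟩ := hφ (fun _ => true) 1
        have h3 := hs 0 one_pos
        have h4 : f (φ 0) s.1 ∈ Metric.ball u (‖u - v‖ / 16) := by
          simpa [C] using h3
        have := Metric.pos_of_mem_ball h4
        linarith
      refine h1 ⟨fun i => f (φ i), 1, ‖u - v‖ / 8, one_pos, by positivity, fun r t => ⟨?_, ?_⟩⟩
      · rw [one_mul]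
        refine (norm_sum_le _ _).trans (Finset.sum_le_sum fun i _ => ?_)
        rw [norm_smul]
        exact mul_le_of_le_one_right (norm_nonneg _) (hf _)
      · refine l1_lower (fun i => f (φ i)) u v (fun e r => ?_) r t
        obtain ⟨s, hs⟩ := hφ e r
        refine ⟨s.1, s.2, fun i hi => ?_⟩
        have h3 : f (φ i) s.1 ∈ Metric.ball (if e i then u else v) (‖u - v‖ / 16) := hs i hi
        rw [mem_ball_iff_norm] at h3
        exact h3.le
    · have hS : ∀ s : S, ∃ z, Tendsto (fun j => f (φ j) s.1) atTop (nhds z) := by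
        intro s
        refine conv_of_pairs _ 1 (fun j => hfs _ s) d hd fun k l => ?_
        obtain ⟨b, hb⟩ := hconv (Nat.pair k l) s
        cases b
        · right
          simpa [C] using hb
        · left
          simpa [C] using hb
      have hX : ∀ x : X, ∃ z, Tendsto (fun j => f (φ j) x) atTop (nhds z) := by
        intro x
        have hc : (0:ℝ) < ‖x‖ + 1 := by positivity
        have hc' : ((‖x‖ + 1 : ℝ) : 𝕜) ≠ 0 := by exact_mod_cast hc.ne'
        obtain ⟨z, hz⟩ := hS ⟨((‖x‖ + 1 : ℝ) : 𝕜)⁻¹ • x, by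
          rw [norm_smul, norm_inv, RCLike.norm_ofReal, abs_of_pos hc, inv_mul_le_iff₀ hc]
          linarith⟩
        refine ⟨((‖x‖ + 1 : ℝ) : 𝕜) * z, ?_⟩
        refine (hz.const_mul ((‖x‖ + 1 : ℝ) : 𝕜)).congr fun j => ?_
        rw [map_smul, smul_eq_mul, mul_inv_cancel_left₀ hc']
      choose z hz using hX
      obtain ⟨g, hg⟩ := h2 (fun j => f (φ j))
        (continuousLinearMapOfTendsto (fun j => f (φ j)) (tendsto_pi_nhds.2 hz)) hz
      exact ⟨g, φ, hφ, hg⟩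
  refine FiniteDimensional.of_isCompact_closedBall₀ 𝕜 one_pos (isCompact_iff_isSeqCompact.2 ?_)
  intro f hf
  obtain ⟨g, φ, hφ, hg⟩ := main f (fun n => by simpa using hf n)
  exact ⟨g, Metric.isClosed_closedBall.mem_of_tendsto hg (Eventually.of_forall fun n => hf _),
    φ, hφ, hg⟩
end

section
/- Let $X$ be a Banach space and $(x'_n)$ a bounded sequence in $X'$ such that $\varphi((y'_n)) > 0$ for every block sequence $(y'_n)$ of $(x'_n)$, where $\varphi((y'_n)) := \sup_{\|x\|=1} \limsup_n |y'_n(x)|$. Then there exist $\delta > 0$ and a block sequence $(y'_n)$ of $(x'_n)$ such that $\varphi((z'_n)) = \delta$ for every sequence $(z'_n)$ obtained from $(y'_n)$ by blocking. -/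
open Filter

/-- `y'` is obtained from `x'` by blocking: there are finite nonempty sets
`A₁ ≤ A₂ ≤ ⋯` of indices (each element of `Aₙ` below each element of `Aₙ₊₁`)
and scalars `(a_k)` with `∑_{k ∈ Aₙ} |a_k| = 1` such that
`y'ₙ = ∑_{k ∈ Aₙ} a_k x'_k`. -/
def IsBlockSeq {𝕜 : Type*} [RCLike 𝕜] {X : Type*} [NormedAddCommGroup X]
    [NormedSpace 𝕜 X] (x' y' : ℕ → X →L[𝕜] 𝕜) : Prop :=
  ∃ (A : ℕ → Finset ℕ) (a : ℕ → 𝕜),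
    (∀ n, (A n).Nonempty) ∧
    (∀ n, ∀ k ∈ A n, ∀ l ∈ A (n + 1), k < l) ∧
    (∀ n, ∑ k ∈ A n, ‖a k‖ = 1) ∧
    (∀ n, y' n = ∑ k ∈ A n, a k • x' k)

/-- `φ((y'ₙ)) = sup_{‖x‖=1} limsup_n |y'ₙ(x)|`. -/
noncomputable def phi {𝕜 : Type*} [RCLike 𝕜] {X : Type*} [NormedAddCommGroup X]
    [NormedSpace 𝕜 X] (y' : ℕ → X →L[𝕜] 𝕜) : ℝ :=
  ⨆ x : {x : X // ‖x‖ = 1}, limsup (fun n => ‖y' n x.1‖) atTop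


section Helpers
variable {𝕜 : Type*} [RCLike 𝕜] {X : Type*} [NormedAddCommGroup X] [NormedSpace 𝕜 X]

/-- `v` is a combination of `x k`, `s ≤ k < e`, of total weight `t`. -/
def WComb (x : ℕ → X →L[𝕜] 𝕜) (s e : ℕ) (t : ℝ) (v : X →L[𝕜] 𝕜) : Prop :=
  ∃ c : ℕ → 𝕜, ∑ k ∈ Finset.Ico s e, ‖c k‖ = t ∧ v = ∑ k ∈ Finset.Ico s e, c k • x k

theorem WComb.zero (x : ℕ → X →L[𝕜] 𝕜) (s e : ℕ) : WComb x s e 0 0 :=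
  ⟨fun _ => 0, by simp, (Finset.sum_eq_zero fun k _ => zero_smul 𝕜 (x k)).symm⟩

theorem WComb.add {x : ℕ → X →L[𝕜] 𝕜} {s e f : ℕ} {t u : ℝ} {v w : X →L[𝕜] 𝕜}
    (hse : s ≤ e) (hef : e ≤ f) (h1 : WComb x s e t v) (h2 : WComb x e f u w) :
    WComb x s f (t + u) (v + w) := by
  obtain ⟨c, hc, rfl⟩ := h1
  obtain ⟨d, hd, rfl⟩ := h2
  refine ⟨fun k => if k < e then c k else d k, ?_, ?_⟩
  · rw [← Finset.sum_Ico_consecutive _ hse hef, ← hc, ← hd]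
    congr 1
    · apply Finset.sum_congr rfl
      intro k hk
      beta_reduce
      rw [if_pos (Finset.mem_Ico.1 hk).2]
    · apply Finset.sum_congr rfl
      intro k hk
      beta_reduce
      rw [if_neg (not_lt.2 (Finset.mem_Ico.1 hk).1)]
  · rw [← Finset.sum_Ico_consecutive _ hse hef]
    congr 1
    · apply Finset.sum_congr rfl
      intro k hk
      beta_reduce
      rw [if_pos (Finset.mem_Ico.1 hk).2]
    · apply Finset.sum_congr rfl
      intro k hk
      beta_reduce
      rw [if_neg (not_lt.2 (Finset.mem_Ico.1 hk).1)]

theorem WComb.smul {x : ℕ → X →L[𝕜] 𝕜} {s e : ℕ} {t : ℝ} {v : X →L[𝕜] 𝕜}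
    (a : 𝕜) (h1 : WComb x s e t v) : WComb x s e (‖a‖ * t) (a • v) := by
  obtain ⟨c, hc, rfl⟩ := h1
  refine ⟨fun k => a * c k, ?_, ?_⟩
  · rw [← hc, Finset.mul_sum]
    simp
  · rw [Finset.smul_sum]
    simp [mul_smul]

theorem WComb.mono {x : ℕ → X →L[𝕜] 𝕜} {s e f : ℕ} {t : ℝ} {v : X →L[𝕜] 𝕜}
    (hse : s ≤ e) (hef : e ≤ f) (h1 : WComb x s e t v) : WComb x s f t v := by
  simpa using h1.add hse hef (WComb.zero x e f)

/-- block with explicit intervals -/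
def Blk (x y : ℕ → X →L[𝕜] 𝕜) (p : ℕ → ℕ) : Prop :=
  StrictMono p ∧ ∀ n, WComb x (p n) (p (n + 1)) 1 (y n)

theorem WComb.trans {x y : ℕ → X →L[𝕜] 𝕜} {p : ℕ → ℕ} (h : Blk x y p) {s e : ℕ} (hse : s ≤ e)
    {t : ℝ} {v : X →L[𝕜] 𝕜} (h1 : WComb y s e t v) : WComb x (p s) (p e) t v := by
  obtain ⟨c, rfl, rfl⟩ := h1
  induction e, hse using Nat.le_induction with
  | base => simpa using WComb.zero x (p s) (p s)
  | succ e hse ih =>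
    rw [Finset.sum_Ico_succ_top hse, Finset.sum_Ico_succ_top hse]
    refine ih.add (h.1.monotone hse) (h.1.monotone (Nat.le_succ e)) ?_
    simpa using (h.2 e).smul (c e)

theorem Blk.trans {x y z : ℕ → X →L[𝕜] 𝕜} {p q : ℕ → ℕ} (h : Blk x y p) (h2 : Blk y z q) :
    Blk x z (fun n => p (q n)) :=
  ⟨h.1.comp h2.1, fun n => (h2.2 n).trans h (h2.1.monotone (Nat.le_succ n))⟩

theorem Blk.refl (x : ℕ → X →L[𝕜] 𝕜) : Blk x x (fun n => n) :=
  ⟨strictMono_id, fun n => ⟨fun _ => 1, by simp, by simp⟩⟩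

theorem Blk.isBlockSeq {x y : ℕ → X →L[𝕜] 𝕜} {p : ℕ → ℕ} (h : Blk x y p) : IsBlockSeq x y := by
  classical
  obtain ⟨hp, hc⟩ := h
  choose c hc1 hc2 using hc
  let a : ℕ → 𝕜 := fun k => if hk : ∃ n, k ∈ Finset.Ico (p n) (p (n + 1)) then c hk.choose k else 0
  have ha : ∀ n, ∀ k ∈ Finset.Ico (p n) (p (n + 1)), a k = c n k := by
    intro n k hk
    have hk' : ∃ n, k ∈ Finset.Ico (p n) (p (n + 1)) := ⟨n, hk⟩
    have hs := hk'.choose_spec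
    have : hk'.choose = n := by
      generalize hk'.choose = m at hs
      rw [Finset.mem_Ico] at hs hk
      have h1 : m < n + 1 := hp.lt_iff_lt.1 (lt_of_le_of_lt hs.1 hk.2)
      have h2 : n < m + 1 := hp.lt_iff_lt.1 (lt_of_le_of_lt hk.1 hs.2)
      omega
    simp only [a]
    rw [dif_pos hk', this]
  refine ⟨fun n => Finset.Ico (p n) (p (n + 1)), a, ?_, ?_, ?_, ?_⟩
  · intro n
    exact Finset.nonempty_Ico.2 (hp (Nat.lt_succ_self n))
  · intro n k hk l hl
    exact lt_of_lt_of_le (Finset.mem_Ico.1 hk).2 (Finset.mem_Ico.1 hl).1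
  · intro n
    rw [← hc1 n]
    exact Finset.sum_congr rfl fun k hk => by rw [ha n k hk]
  · intro n
    rw [hc2 n]
    exact Finset.sum_congr rfl fun k hk => by rw [ha n k hk]

theorem IsBlockSeq.blk {x y : ℕ → X →L[𝕜] 𝕜} (h : IsBlockSeq x y) : ∃ p, Blk x y p := by
  classical
  obtain ⟨A, a, hne, hlt, h1, h2⟩ := h
  have hsub : ∀ n, A n ⊆ Finset.Ico ((A n).min' (hne n)) ((A (n + 1)).min' (hne (n + 1))) := by
    intro n k hk
    rw [Finset.mem_Ico]
    exact ⟨Finset.min'_le _ _ hk, hlt n k hk _ (Finset.min'_mem _ _)⟩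
  refine ⟨fun n => (A n).min' (hne n), strictMono_nat_of_lt_succ fun n =>
    hlt n _ (Finset.min'_mem _ _) _ (Finset.min'_mem _ _), fun n =>
    ⟨fun k => if k ∈ A n then a k else 0, ?_, ?_⟩⟩
  · rw [← h1 n, ← Finset.sum_subset (hsub n)]
    · exact Finset.sum_congr rfl fun k hk => by beta_reduce; rw [if_pos hk]
    · intro k _ hk
      simp [hk]
  · rw [h2 n, ← Finset.sum_subset (hsub n)]
    · exact Finset.sum_congr rfl fun k hk => by beta_reduce; rw [if_pos hk]
    · intro k _ hk
      beta_reduce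
      rw [if_neg hk]
      exact zero_smul 𝕜 (x k)

theorem WComb.norm_apply_le {x : ℕ → X →L[𝕜] 𝕜} {s e : ℕ} {v : X →L[𝕜] 𝕜}
    (h : WComb x s e 1 v) (u : X) (b : ℝ) (hb : ∀ k, s ≤ k → ‖x k u‖ ≤ b) : ‖v u‖ ≤ b := by
  obtain ⟨c, hc, rfl⟩ := h
  calc ‖(∑ k ∈ Finset.Ico s e, c k • x k) u‖ = ‖∑ k ∈ Finset.Ico s e, c k * x k u‖ := by
        simp
    _ ≤ ∑ k ∈ Finset.Ico s e, ‖c k‖ * b := by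
        refine norm_sum_le_of_le _ fun k hk => ?_
        rw [norm_mul]
        exact mul_le_mul_of_nonneg_left (hb k (Finset.mem_Ico.1 hk).1) (norm_nonneg _)
    _ = b := by rw [← Finset.sum_mul, hc, one_mul]

/-- pointwise bound on the unit sphere -/
def PB (C : ℝ) (x : ℕ → X →L[𝕜] 𝕜) : Prop := ∀ n, ∀ u : X, ‖u‖ = 1 → ‖x n u‖ ≤ C

theorem PB.blk {C : ℝ} {x y : ℕ → X →L[𝕜] 𝕜} {p : ℕ → ℕ} (hC : PB C x) (h : Blk x y p) : PB C y :=
  fun n u hu => (h.2 n).norm_apply_le u C fun k _ => hC k u hu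

theorem phi_le {C : ℝ} {x y : ℕ → X →L[𝕜] 𝕜} {p : ℕ → ℕ} (hC : PB C x) (h : Blk x y p) :
    phi y ≤ phi x := by
  have hy := hC.blk h
  have bd : ∀ {z : ℕ → X →L[𝕜] 𝕜}, PB C z → ∀ u : {u : X // ‖u‖ = 1},
      IsBoundedUnder (· ≤ ·) atTop (fun n => ‖z n u.1‖) := fun hz u =>
    isBoundedUnder_of ⟨C, fun n => hz n u.1 u.2⟩
  have cbd : ∀ {z : ℕ → X →L[𝕜] 𝕜}, ∀ u : {u : X // ‖u‖ = 1},
      IsCoboundedUnder (· ≤ ·) atTop (fun n => ‖z n u.1‖) := fun u =>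
    IsBoundedUnder.isCoboundedUnder_le (isBoundedUnder_of ⟨0, fun n => norm_nonneg _⟩)
  unfold phi
  apply ciSup_mono
  · refine ⟨C, ?_⟩
    rintro _ ⟨u, rfl⟩
    exact limsup_le_of_le (cbd u) (Eventually.of_forall fun n => hC n u.1 u.2)
  · intro u
    refine le_of_forall_gt_imp_ge_of_dense fun b hb => ?_
    have := eventually_lt_of_limsup_lt hb (bd hC u)
    obtain ⟨N, hN⟩ := eventually_atTop.1 this
    refine limsup_le_of_le (cbd u) ?_
    filter_upwards [eventually_ge_atTop N] with n hn
    exact (h.2 n).norm_apply_le u.1 b fun k hk =>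
      (hN k (hn.trans ((h.1.id_le n).trans hk))).le

theorem phi_shift (x : ℕ → X →L[𝕜] 𝕜) (m : ℕ) : phi (fun n => x (n + m)) = phi x := by
  unfold phi
  congr 1
  ext u
  exact limsup_nat_add (fun n => ‖x n u.1‖) m

theorem Blk.shift {x y : ℕ → X →L[𝕜] 𝕜} {p : ℕ → ℕ} (h : Blk x y p) (m : ℕ) :
    Blk (fun n => x (n + m)) (fun n => y (n + m)) (fun n => p (n + m) - m) := by
  have hp : ∀ n, n + m ≤ p (n + m) := fun n => h.1.id_le (n + m)
  constructor
  · refine strictMono_nat_of_lt_succ fun n => ?_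
    have h1 := hp n
    have h2 : p (n + m) < p (n + 1 + m) := h.1 (by omega)
    show p (n + m) - m < p (n + 1 + m) - m
    omega
  · intro n
    obtain ⟨c, hc1, hc2⟩ := h.2 (n + m)
    have e1 : p (n + m) - m + m = p (n + m) := by have := hp n; omega
    have e2 : p (n + 1 + m) - m + m = p (n + m + 1) := by
      have := hp (n + 1)
      rw [show n + m + 1 = n + 1 + m by ring]
      omega
    refine ⟨fun k => c (k + m), ?_, ?_⟩
    · rw [Finset.sum_Ico_add' (fun k => ‖c k‖), e1, e2, hc1]
    · rw [Finset.sum_Ico_add' (fun k => c k • x k), e1, e2]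
      exact hc2

/-- iterated interval endpoints -/
def itv (p : ℕ → ℕ → ℕ) (k : ℕ) : ℕ → ℕ → ℕ
  | 0, n => n
  | i + 1, n => itv p k i (p (k + i) n)

theorem blk_itv {Y : ℕ → ℕ → X →L[𝕜] 𝕜} {p : ℕ → ℕ → ℕ} (h : ∀ k, Blk (Y k) (Y (k + 1)) (p k))
    (k i : ℕ) : Blk (Y k) (Y (k + i)) (itv p k i) := by
  induction i with
  | zero => exact Blk.refl _
  | succ i ih => exact ih.trans (h (k + i))

theorem blk_diag {Y : ℕ → ℕ → X →L[𝕜] 𝕜} {p : ℕ → ℕ → ℕ} (h : ∀ k, Blk (Y k) (Y (k + 1)) (p k))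
    (k : ℕ) : Blk (Y k) (fun i => Y (i + k) (i + k)) (fun i => itv p k i (i + k)) := by
  have key : ∀ i, itv p k i (i + k + 1) ≤ itv p k (i + 1) (i + 1 + k) := by
    intro i
    show _ ≤ itv p k i (p (k + i) (i + 1 + k))
    apply (blk_itv h k i).1.monotone
    have := (h (k + i)).1.id_le (i + 1 + k)
    simp only [id] at this
    omega
  constructor
  · refine strictMono_nat_of_lt_succ fun i => ?_
    exact lt_of_lt_of_le ((blk_itv h k i).1 (Nat.lt_succ_self _)) (key i)
  · intro i
    have h1 := (blk_itv h k i).2 (i + k)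
    rw [Nat.add_comm k i] at h1
    exact h1.mono ((blk_itv h k i).1.monotone (Nat.le_succ _)) (key i)

end Helpers

/-- If every block sequence `(y'ₙ)` of a bounded sequence `(x'ₙ)` in `X'` has
`φ((y'ₙ)) > 0`, then there are a `δ > 0` and a block sequence `(y'ₙ)` such that
`φ((z'ₙ)) = δ` for every sequence `(z'ₙ)` obtained from `(y'ₙ)` by blocking. -/
theorem exists_stable_block_sequence {𝕜 : Type*} [RCLike 𝕜] {X : Type*}
    [NormedAddCommGroup X] [NormedSpace 𝕜 X] [CompleteSpace X]
    (x' : ℕ → X →L[𝕜] 𝕜) (hb : ∃ C : ℝ, ∀ n, ‖x' n‖ ≤ C)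
    (h : ∀ y' : ℕ → X →L[𝕜] 𝕜, IsBlockSeq x' y' → 0 < phi y') :
    ∃ δ : ℝ, 0 < δ ∧ ∃ y' : ℕ → X →L[𝕜] 𝕜, IsBlockSeq x' y' ∧
      ∀ z' : ℕ → X →L[𝕜] 𝕜, IsBlockSeq y' z' → phi z' = δ := by
  obtain ⟨C, hC⟩ := hb
  have hPB : PB C x' := fun n u hu => by
    have := (x' n).le_opNorm u
    rw [hu, mul_one] at this
    exact this.trans (hC n)
  have step : ∀ (k : ℕ) (y : {y : ℕ → X →L[𝕜] 𝕜 // ∃ p, Blk x' y p}),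
      ∃ w : {y : ℕ → X →L[𝕜] 𝕜 // ∃ p, Blk x' y p}, (∃ p, Blk y.1 w.1 p) ∧
        ∀ z p, Blk y.1 z p → phi w.1 ≤ phi z + 1 / ((k : ℝ) + 1) := by
    rintro k ⟨y, q, hy⟩
    let S : Set ℝ := {r | ∃ z p, Blk y z p ∧ phi z = r}
    have hSne : S.Nonempty := ⟨phi y, y, _, Blk.refl y, rfl⟩
    have hSb : BddBelow S := by
      refine ⟨0, ?_⟩
      rintro _ ⟨z, p, hz, rfl⟩
      exact (h z (hy.trans hz).isBlockSeq).le
    have hpos : (0 : ℝ) < 1 / ((k : ℝ) + 1) := by positivity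
    obtain ⟨_, ⟨w, p, hw, rfl⟩, hlt⟩ :=
      exists_lt_of_csInf_lt hSne (lt_add_of_pos_right (sInf S) hpos)
    refine ⟨⟨w, _, hy.trans hw⟩, ⟨p, hw⟩, fun z p' hz => ?_⟩
    have : sInf S ≤ phi z := csInf_le hSb ⟨z, p', hz, rfl⟩
    show phi w ≤ _
    linarith
  choose f hf1 hf2 using step
  let Z : ℕ → {y : ℕ → X →L[𝕜] 𝕜 // ∃ p, Blk x' y p} := fun k =>
    Nat.rec ⟨x', _, Blk.refl x'⟩ (fun k y => f k y) k
  let Y : ℕ → ℕ → X →L[𝕜] 𝕜 := fun k => (Z k).1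
  have hY : ∀ k, ∃ p, Blk (Y k) (Y (k + 1)) p := fun k => hf1 k (Z k)
  have hY2 : ∀ k z p, Blk (Y k) z p → phi (Y (k + 1)) ≤ phi z + 1 / ((k : ℝ) + 1) :=
    fun k => hf2 k (Z k)
  have hYPB : ∀ k, PB C (Y k) := fun k => by
    obtain ⟨p, hp⟩ := (Z k).2
    exact hPB.blk hp
  choose p hp using hY
  let d : ℕ → X →L[𝕜] 𝕜 := fun n => Y n n
  have hd : Blk x' d _ := blk_diag hp 0
  refine ⟨phi d, h d hd.isBlockSeq, d, hd.isBlockSeq, fun z hz => ?_⟩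
  obtain ⟨q, hq⟩ := hz.blk
  refine le_antisymm (phi_le (hPB.blk hd) hq) ?_
  have key : ∀ k : ℕ, phi d ≤ phi z + 1 / ((k : ℝ) + 1) := by
    intro k
    have h1 : phi d ≤ phi (Y (k + 1)) := by
      rw [← phi_shift d (k + 1)]
      exact phi_le (hYPB (k + 1)) (blk_diag hp (k + 1))
    have h2 := hY2 k _ _ ((blk_diag hp k).trans (hq.shift k))
    rw [phi_shift z k] at h2
    exact h1.trans h2
  have hlim := tendsto_one_div_add_atTop_nhds_zero_nat (𝕜 := ℝ)
  have hlim2 := hlim.const_add (phi z)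
  rw [add_zero] at hlim2
  exact ge_of_tendsto' hlim2 key
end
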